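/- Let r > 1 and let f ∈ ℂ[x₁,…,xₙ] vanish to order at least r at every point y of an irreducible d-dimensional subvariety Y ⊆ ℂⁿ. Then for all y ∈ Y, r·c_y(f) ≤ n − d. -/

import Mathlib

/-! The threshold at `y` is bounded by comparing volumes of small tubes around `Y`.

Noether normalization gives a finite polynomial map `φ : Y → ℂˢ` with `d ≤ s`. Because `ℂ[z₁,…,z_s]`
is integrally closed and `Y` is irreducible, `φ` is open on `Y` (`image_mem_nhds`,
`exists_projection`), so `φ (Y ∩ B)` has positive volume for every ball `B` around `y`. As `φ` is
Lipschitz on `B`, at least a constant times `ε ^ (-2 * s)` disjoint `ε`-balls can be centred on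
`Y ∩ B`, hence the `ε`-tube around `Y ∩ B` has volume at least a constant times
`ε ^ (2 * n - 2 * s)` (`volume_tube`).

Vanishing to order `r` along `Y` gives `|f| ≤ C ε ^ r` on this tube (`norm_eval_le`). If `|f|^{-2c}`
is integrable near `y`, then `ε ^ (2 * n - 2 * s - 2 * r * c)` stays bounded as `ε → 0`, so
`r * c ≤ n - s ≤ n - d` (`mul_le_of_integrableOn`). No resolution of singularities and no generic
smoothness of `Y` is needed.
-/

open MeasureTheory MvPolynomial

/-- The log-canonical threshold of a polynomial `f ∈ ℂ[x₁,…,xₙ]` at a point `y`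
(with `f(y) = 0`), defined analytically as the supremum of the positive reals `s`
such that `‖f‖^{-2s}` is integrable on some neighbourhood of `y`. -/
noncomputable def lctAt {n : ℕ} (f : MvPolynomial (Fin n) ℂ) (y : Fin n → ℂ) : ℝ :=
  sSup {s : ℝ | 0 < s ∧ ∃ U ∈ nhds y,
    MeasureTheory.IntegrableOn
      (fun x : Fin n → ℂ => ‖MvPolynomial.eval x f‖ ^ (-2 * s)) U}

/-- The (global) log-canonical threshold of `f`, the infimum of the local
log-canonical thresholds over the zeros of `f`. -/
noncomputable def lct {n : ℕ} (f : MvPolynomial (Fin n) ℂ) : ℝ :=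
  sInf {c : ℝ | ∃ y, MvPolynomial.eval y f = 0 ∧ c = lctAt f y}

/-! ### Finite projections of affine varieties -/

section alg
variable {n s : ℕ} {A : Type*} [CommRing A] [IsDomain A] [Algebra ℂ A]
  [Algebra (MvPolynomial (Fin s) ℂ) A] [IsScalarTower ℂ (MvPolynomial (Fin s) ℂ) A]
  [Algebra.IsIntegral (MvPolynomial (Fin s) ℂ) A] [FaithfulSMul (MvPolynomial (Fin s) ℂ) A]

/-- Here `A` is the coordinate ring of a variety in `ℂⁿ`, finite over `ℂ[z₁,…,z_s]` via a projection
to `ℂˢ`. Every root `t` of the minimal polynomial of `a : A` specialised at `z` is the value of `a`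
at a point of the variety lying over `z`. Since `ℂ[z]` is integrally closed, the kernel of
`ℂ[z][T] → A`, `T ↦ a`, is generated by the minimal polynomial, hence lies in the maximal ideal of
the point `(z, t)`; lying over and the Nullstellensatz then give the point of the variety. -/
lemma exists_point_of_root (π : MvPolynomial (Fin n) ℂ →ₐ[ℂ] A) (a : A) (z : Fin s → ℂ) (t : ℂ)
    (ht : ((minpoly (MvPolynomial (Fin s) ℂ) a).map (eval z)).IsRoot t) :
    ∃ x : Fin n → ℂ, (∀ p, π p = 0 → eval x p = 0) ∧
      (∀ q p, π p = algebraMap (MvPolynomial (Fin s) ℂ) A q → eval x p = eval z q) ∧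
      (∀ p, π p = a → eval x p = t) := by
  let _ : Algebra (Polynomial (MvPolynomial (Fin s) ℂ)) A :=
    ((Polynomial.aeval a : Polynomial (MvPolynomial (Fin s) ℂ) →ₐ[MvPolynomial (Fin s) ℂ] A) :
      Polynomial (MvPolynomial (Fin s) ℂ) →+* A).toAlgebra
  have hal : ∀ p : Polynomial (MvPolynomial (Fin s) ℂ),
      algebraMap (Polynomial (MvPolynomial (Fin s) ℂ)) A p = Polynomial.aeval a p := fun _ => rfl
  have : IsScalarTower (MvPolynomial (Fin s) ℂ) (Polynomial (MvPolynomial (Fin s) ℂ)) A :=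
    IsScalarTower.of_algebraMap_eq fun q => by
      rw [hal, Polynomial.algebraMap_eq, Polynomial.aeval_C]
  have : Algebra.IsIntegral (Polynomial (MvPolynomial (Fin s) ℂ)) A := Algebra.IsIntegral.tower_top (MvPolynomial (Fin s) ℂ)
  let ev : Polynomial (MvPolynomial (Fin s) ℂ) →+* ℂ := Polynomial.eval₂RingHom (eval z) t
  have hev : Function.Surjective ev := fun c => ⟨Polynomial.C (C c), by simp [ev]⟩
  have : (RingHom.ker ev).IsMaximal := RingHom.ker_isMaximal_of_surjective ev hev
  obtain ⟨Q, hQ, hQe⟩ := Ideal.exists_ideal_over_maximal_of_isIntegral (S := A) (RingHom.ker ev) (by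
    intro p hp
    rw [RingHom.mem_ker, hal] at hp
    obtain ⟨c, rfl⟩ := minpoly.isIntegrallyClosed_dvd (Algebra.IsIntegral.isIntegral a) hp
    rw [RingHom.mem_ker, map_mul]
    have : ev (minpoly (MvPolynomial (Fin s) ℂ) a) = 0 := by
      simpa [ev, Polynomial.eval_map] using ht
    rw [this, zero_mul])
  have key : ∀ p : Polynomial (MvPolynomial (Fin s) ℂ), ev p = 0 → Polynomial.aeval a p ∈ Q := by
    intro p hp
    have : p ∈ Q.comap (algebraMap (Polynomial (MvPolynomial (Fin s) ℂ)) A) := hQe ▸ hp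
    exact this
  have hne : Q.comap π ≠ ⊤ := Ideal.comap_ne_top _ hQ.ne_top
  obtain ⟨M, hM, hle⟩ := Ideal.exists_le_maximal _ hne
  obtain ⟨x, rfl⟩ := isMaximal_iff_eq_vanishingIdeal_singleton.1 hM
  have hx : ∀ p, π p ∈ Q → eval x p = 0 := by
    intro p hp
    have := hle (show p ∈ Q.comap π from hp)
    rw [mem_vanishingIdeal_iff] at this
    simpa [coe_aeval_eq_eval] using this x rfl
  have hC : ∀ c : ℂ, π (C c) = algebraMap (MvPolynomial (Fin s) ℂ) A (C c) := by
    intro c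
    rw [← MvPolynomial.algebraMap_eq, AlgHom.commutes, ← MvPolynomial.algebraMap_eq, ← IsScalarTower.algebraMap_apply]
  refine ⟨x, fun p hp => hx p (hp ▸ Q.zero_mem), fun q p hp => ?_, fun p hp => ?_⟩
  · have := hx (p - C (eval z q)) (by
      have := key (Polynomial.C (q - C (eval z q))) (by simp [ev])
      rw [Polynomial.aeval_C, map_sub] at this
      rwa [map_sub, hp, hC])
    simpa [sub_eq_zero] using this
  · have := hx (p - C t) (by
      have := key (Polynomial.X - Polynomial.C (C t)) (by simp [ev])
      rw [map_sub, Polynomial.aeval_C, Polynomial.aeval_X] at this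
      rwa [map_sub, hp, hC])
    simpa [sub_eq_zero] using this

omit [IsDomain A] [Algebra ℂ A] [IsScalarTower ℂ (MvPolynomial (Fin s) ℂ) A]
  [FaithfulSMul (MvPolynomial (Fin s) ℂ) A] in
lemma krullDim_le : ringKrullDim A ≤ s := by
  have h : ringKrullDim (MvPolynomial (Fin s) ℂ) = s := by
    rw [MvPolynomial.ringKrullDim_of_isNoetherianRing]; simp
  rw [← h]
  refine Order.krullDim_le_of_strictMono (PrimeSpectrum.comap (algebraMap (MvPolynomial (Fin s) ℂ) A)) ?_
  intro P Q hPQ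
  exact Ideal.IsIntegral.comap_lt_comap hPQ
end alg

/-- The constant coefficient of a monic polynomial is, up to sign, the product of its roots, so a
small constant coefficient forces a small root. -/
lemma exists_root_norm_lt (p : Polynomial ℂ) (hp : p.Monic) (δ : ℝ) (hδ : 0 < δ)
    (h : ‖p.coeff 0‖ < δ ^ p.natDegree) : ∃ t, p.IsRoot t ∧ ‖t‖ < δ := by
  by_contra! hcon
  have hs := IsAlgClosed.splits p
  have h1 := hs.coeff_zero_eq_leadingCoeff_mul_prod_roots
  have h2 : ∀ m : Multiset ℂ, (∀ t ∈ m, δ ≤ ‖t‖) → δ ^ m.card ≤ ‖m.prod‖ := by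
    intro m
    induction m using Multiset.induction_on with
    | empty => simp
    | cons a m ih =>
      intro h
      rw [Multiset.card_cons, Multiset.prod_cons, norm_mul, pow_succ, mul_comm]
      exact mul_le_mul (h a (by simp)) (ih fun t ht => h t (by simp [ht])) (by positivity) (norm_nonneg _)
  have h3 := h2 p.roots fun t ht => hcon t (Polynomial.isRoot_of_mem_roots ht)
  rw [h1, hp.leadingCoeff] at h
  rw [← hs.natDegree_eq_card_roots] at h3
  simp at h
  linarith

section alg
variable {n s : ℕ} {A : Type*} [CommRing A] [IsDomain A] [Algebra ℂ A]
  [Algebra (MvPolynomial (Fin s) ℂ) A] [IsScalarTower ℂ (MvPolynomial (Fin s) ℂ) A]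
  [Algebra.IsIntegral (MvPolynomial (Fin s) ℂ) A] [FaithfulSMul (MvPolynomial (Fin s) ℂ) A]

omit [IsDomain A] [Algebra.IsIntegral (MvPolynomial (Fin s) ℂ) A]
  [FaithfulSMul (MvPolynomial (Fin s) ℂ) A] in
/-- Integral equations in the coordinate ring specialise to the points of the variety. -/
lemma isRoot_of_aeval_eq_zero (π : MvPolynomial (Fin n) ℂ →ₐ[ℂ] A)
    (φ : Fin s → MvPolynomial (Fin n) ℂ)
    (hφ : ∀ j, π (φ j) = algebraMap (MvPolynomial (Fin s) ℂ) A (X j))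
    (x : Fin n → ℂ) (hx : ∀ p, π p = 0 → eval x p = 0)
    (P : Polynomial (MvPolynomial (Fin s) ℂ)) (p : MvPolynomial (Fin n) ℂ)
    (hP : Polynomial.aeval (π p) P = 0) :
    (P.map (eval fun j => eval x (φ j))).IsRoot (eval x p) := by
  let l : MvPolynomial (Fin s) ℂ →+* MvPolynomial (Fin n) ℂ := (aeval φ : _ →ₐ[ℂ] _)
  have h1 : (π : MvPolynomial (Fin n) ℂ →+* A).comp l = algebraMap (MvPolynomial (Fin s) ℂ) A := by
    have : π.comp (aeval φ) = IsScalarTower.toAlgHom ℂ (MvPolynomial (Fin s) ℂ) A := by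
      ext j
      simpa using hφ j
    refine RingHom.ext fun q => ?_
    exact congrArg (fun f : MvPolynomial (Fin s) ℂ →ₐ[ℂ] A => f q) this
  have h2 : (eval x).comp l = eval fun j => eval x (φ j) := by
    ext j <;> simp [l]
  have h3 : π (P.eval₂ l p) = 0 := by
    have := Polynomial.hom_eval₂ P l (π : MvPolynomial (Fin n) ℂ →+* A) p
    rw [h1] at this
    exact this.trans hP
  have h4 := hx _ h3
  rw [Polynomial.hom_eval₂, h2] at h4
  rwa [Polynomial.IsRoot, Polynomial.eval_map]

omit [IsDomain A] [FaithfulSMul (MvPolynomial (Fin s) ℂ) A] in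
/-- Finite projections are proper: the coordinates of a point are roots of monic polynomials whose
coefficients stay bounded over a ball, so Cauchy's bound applies to them. -/
lemma isCompact_preimage (π : MvPolynomial (Fin n) ℂ →ₐ[ℂ] A)
    (φ : Fin s → MvPolynomial (Fin n) ℂ)
    (hφ : ∀ j, π (φ j) = algebraMap (MvPolynomial (Fin s) ℂ) A (X j)) (b : Fin s → ℂ) :
    IsCompact {x : Fin n → ℂ | (∀ p, π p = 0 → eval x p = 0) ∧
      (fun j => eval x (φ j)) ∈ Metric.closedBall b 1} := by
  have hΦ : Continuous fun x : Fin n → ℂ => fun j => eval x (φ j) :=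
    continuous_pi fun j => MvPolynomial.continuous_eval _
  have h1 : ∀ i, ∃ R : ℝ, ∀ x : Fin n → ℂ, (∀ p, π p = 0 → eval x p = 0) →
      (fun j => eval x (φ j)) ∈ Metric.closedBall b 1 → ‖x i‖ ≤ R := by
    intro i
    let m := minpoly (MvPolynomial (Fin s) ℂ) (π (X i))
    have hm : m.Monic := minpoly.monic (Algebra.IsIntegral.isIntegral _)
    obtain ⟨M, hM⟩ := (isCompact_closedBall b 1).exists_bound_of_continuousOn
      (f := fun z => ∑ j ∈ Finset.range m.natDegree, ‖eval z (m.coeff j)‖)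
      (Continuous.continuousOn (continuous_finsetSum _ fun j _ =>
        (MvPolynomial.continuous_eval _).norm))
    refine ⟨M + 1, fun x hx hb => ?_⟩
    have hroot := isRoot_of_aeval_eq_zero π φ hφ x hx m (X i) (minpoly.aeval _ _)
    rw [eval_X] at hroot
    have hmm := hm.map (eval fun j => eval x (φ j))
    have h2 := hroot.norm_lt_cauchyBound hmm.ne_zero
    have hM0 : 0 ≤ M := (norm_nonneg _).trans (hM _ hb)
    have h3 : Polynomial.cauchyBound (m.map (eval fun j => eval x (φ j))) ≤ ⟨M, hM0⟩ + 1 := by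
      rw [Polynomial.cauchyBound, hmm.leadingCoeff]
      simp only [nnnorm_one, div_one]
      refine add_le_add_left ?_ 1
      refine Finset.sup_le fun j hj => ?_
      rw [hm.natDegree_map] at hj
      have h4 := hM _ hb
      rw [Real.norm_of_nonneg (Finset.sum_nonneg fun _ _ => norm_nonneg _)] at h4
      rw [Polynomial.coeff_map]
      refine NNReal.coe_le_coe.1 (le_trans ?_ h4)
      exact Finset.single_le_sum (f := fun j' => ‖eval (fun j => eval x (φ j)) (m.coeff j')‖)
        (fun _ _ => norm_nonneg _) hj
    have h5 : ((Polynomial.cauchyBound (m.map (eval fun j => eval x (φ j))) : NNReal) : ℝ) ≤ M + 1 := by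
      exact_mod_cast h3
    exact (NNReal.coe_le_coe.2 h2.le).trans h5
  choose R hR using h1
  refine Metric.isCompact_of_isClosed_isBounded ?_ ?_
  · refine IsClosed.inter (s₁ := {x : Fin n → ℂ | ∀ p, π p = 0 → eval x p = 0}) ?_
      (Metric.isClosed_closedBall.preimage hΦ)
    simp only [Set.ofPred_forall]
    exact isClosed_iInter fun p => isClosed_iInter fun _ =>
      isClosed_eq (MvPolynomial.continuous_eval p) continuous_const
  · rw [isBounded_iff_forall_norm_le]
    refine ⟨∑ i, |R i|, fun x hx => ?_⟩
    refine (pi_norm_le_iff_of_nonneg (Finset.sum_nonneg fun _ _ => abs_nonneg _)).2 fun i => ?_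
    refine ((hR i x hx.1 hx.2).trans (le_abs_self _)).trans ?_
    exact Finset.single_le_sum (f := fun i => |R i|) (fun _ _ => abs_nonneg _) (Finset.mem_univ i)

/-- Finite projections of an irreducible variety onto affine space are open. With `g` a polynomial
vanishing at `y` and at no other point of the fibre through `y`, the minimal polynomial of `g` has a
constant coefficient vanishing at the image `b` of `y`. Over `z` close to `b` there is thus a point
of the variety at which `g` is small, and by properness this point must be close to `y`. -/
lemma image_mem_nhds (π : MvPolynomial (Fin n) ℂ →ₐ[ℂ] A)
    (φ : Fin s → MvPolynomial (Fin n) ℂ)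
    (hφ : ∀ j, π (φ j) = algebraMap (MvPolynomial (Fin s) ℂ) A (X j))
    (y : Fin n → ℂ) (hy : ∀ p, π p = 0 → eval y p = 0) (U : Set (Fin n → ℂ)) (hU : U ∈ nhds y) :
    (fun x j => eval x (φ j)) '' ({x | ∀ p, π p = 0 → eval x p = 0} ∩ U) ∈
      nhds (fun j => eval y (φ j)) := by
  classical
  set b : Fin s → ℂ := fun j => eval y (φ j) with hb
  let m : Fin n → Polynomial (MvPolynomial (Fin s) ℂ) := fun i => minpoly _ (π (X i))
  -- On the fibre over `b`, the `i`-th coordinate is a root of `m i` specialised at `b`. Hence `h`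
  -- vanishes on the whole fibre except at `y`.
  let h : MvPolynomial (Fin n) ℂ :=
    ∏ i, ∏ c ∈ ((m i).map (eval b)).roots.toFinset.erase (y i), (X i - C c)
  have hhy : eval y h ≠ 0 := by
    simp only [h, map_prod, map_sub, eval_X, eval_C]
    refine Finset.prod_ne_zero_iff.2 fun i _ => Finset.prod_ne_zero_iff.2 fun c hc => ?_
    exact sub_ne_zero.2 (Finset.ne_of_mem_erase hc).symm
  let g : MvPolynomial (Fin n) ℂ := h - C (eval y h)
  have hgy : eval y g = 0 := by simp [g]
  have hg : ∀ x, (∀ p, π p = 0 → eval x p = 0) → (fun j => eval x (φ j)) = b → eval x g = 0 →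
      x = y := by
    intro x hx hxb hgx
    by_contra hne
    obtain ⟨i, hi⟩ := Function.ne_iff.1 hne
    have hroot := isRoot_of_aeval_eq_zero π φ hφ x hx (m i) (X i) (minpoly.aeval _ _)
    rw [eval_X, hxb] at hroot
    have hmi : (m i).Monic := minpoly.monic (Algebra.IsIntegral.isIntegral _)
    have hh : eval x h = 0 := by
      simp only [h, map_prod, map_sub, eval_X, eval_C]
      refine Finset.prod_eq_zero (Finset.mem_univ i) (Finset.prod_eq_zero (i := x i) ?_ (sub_self _))
      rw [Finset.mem_erase, Multiset.mem_toFinset, Polynomial.mem_roots (hmi.map _).ne_zero]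
      exact ⟨hi, hroot⟩
    apply hhy
    simpa [g, hh] using hgx
  have hΦ : Continuous fun x : Fin n → ℂ => fun j => eval x (φ j) :=
    continuous_pi fun j => MvPolynomial.continuous_eval _
  -- On the compact part of the variety over `closedBall b 1` outside `U`, the projection cannot be
  -- close to `b` while `g` is small.
  have hK := (isCompact_preimage π φ hφ b).diff (isOpen_interior (s := U))
  obtain ⟨δ, hδ0, hδ⟩ := hK.exists_forall_le'
    (f := fun x => dist (fun j => eval x (φ j)) b + ‖eval x g‖) (a := 0)
    ((hΦ.dist continuous_const).add (MvPolynomial.continuous_eval g).norm).continuousOn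
    (by
      rintro x ⟨⟨hx, -⟩, hxU⟩
      by_contra! hle
      have h1 := dist_nonneg (x := fun j => eval x (φ j)) (y := b)
      have h2 := norm_nonneg (eval x g)
      have h3 := hg x hx (dist_le_zero.1 (by linarith)) (norm_le_zero_iff.1 (by linarith))
      exact hxU (h3 ▸ mem_interior_iff_mem_nhds.2 hU))
  let P := minpoly (MvPolynomial (Fin s) ℂ) (π g)
  have hP : P.Monic := minpoly.monic (Algebra.IsIntegral.isIntegral _)
  have hP0 : eval b (P.coeff 0) = 0 := by
    have := isRoot_of_aeval_eq_zero π φ hφ y hy P g (minpoly.aeval _ _)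
    rwa [hgy, Polynomial.IsRoot, ← Polynomial.coeff_zero_eq_eval_zero, Polynomial.coeff_map] at this
  have hev : ∀ᶠ z in nhds b, ‖eval z (P.coeff 0)‖ < (δ / 2) ^ P.natDegree := by
    have : ContinuousAt (fun z => ‖eval z (P.coeff 0)‖) b :=
      (MvPolynomial.continuous_eval _).norm.continuousAt
    refine this.eventually_lt_const ?_
    simp only [hP0, norm_zero]
    positivity
  filter_upwards [hev, Metric.ball_mem_nhds b (lt_min one_pos (half_pos hδ0))] with z hz hzb
  obtain ⟨t, ht, htδ⟩ := exists_root_norm_lt (P.map (eval z)) (hP.map _) (δ / 2) (half_pos hδ0)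
    (by rwa [hP.natDegree_map, Polynomial.coeff_map])
  obtain ⟨x, hx, hx1, hx2⟩ := exists_point_of_root π (π g) z t ht
  have hxz : (fun j => eval x (φ j)) = z := by
    ext j
    rw [hx1 (X j) (φ j) (hφ j), eval_X]
  refine ⟨x, ⟨hx, ?_⟩, hxz⟩
  by_contra hxU
  rw [Metric.mem_ball, lt_min_iff] at hzb
  have := hδ x ⟨⟨hx, by rw [hxz]; exact hzb.1.le⟩, fun h => hxU (interior_subset h)⟩
  rw [hxz, hx2 g rfl] at this
  linarith
end alg

/-- Noether normalization supplies the projection. Only `d ≤ s` is recorded, which is the direction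
needed for the upper bound on the threshold. -/
lemma exists_projection {n d : ℕ} (I : Ideal (MvPolynomial (Fin n) ℂ)) (hI : I.IsPrime)
    (hdim : ringKrullDim (MvPolynomial (Fin n) ℂ ⧸ I) = (d : WithBot (WithTop ℕ))) :
    ∃ s, d ≤ s ∧ ∃ φ : Fin s → MvPolynomial (Fin n) ℂ,
      ∀ y ∈ {y | ∀ g ∈ I, eval y g = 0}, ∀ U ∈ nhds y,
        (fun x j => eval x (φ j)) '' ({y | ∀ g ∈ I, eval y g = 0} ∩ U) ∈
          nhds (fun j => eval y (φ j)) := by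
  obtain ⟨s, -, g, hg, hgi⟩ := exists_integral_inj_algHom_of_quotient I hI.ne_top
  let _ : Algebra (MvPolynomial (Fin s) ℂ) (MvPolynomial (Fin n) ℂ ⧸ I) :=
    (g : MvPolynomial (Fin s) ℂ →+* MvPolynomial (Fin n) ℂ ⧸ I).toAlgebra
  have hal : ∀ q, algebraMap (MvPolynomial (Fin s) ℂ) (MvPolynomial (Fin n) ℂ ⧸ I) q = g q :=
    fun _ => rfl
  have : IsScalarTower ℂ (MvPolynomial (Fin s) ℂ) (MvPolynomial (Fin n) ℂ ⧸ I) :=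
    IsScalarTower.of_algebraMap_eq fun c => by rw [hal, AlgHom.commutes]
  have : Algebra.IsIntegral (MvPolynomial (Fin s) ℂ) (MvPolynomial (Fin n) ℂ ⧸ I) := ⟨hgi⟩
  have : FaithfulSMul (MvPolynomial (Fin s) ℂ) (MvPolynomial (Fin n) ℂ ⧸ I) :=
    (faithfulSMul_iff_algebraMap_injective _ _).2 hg
  have hs : (d : WithBot (WithTop ℕ)) ≤ (s : WithBot (WithTop ℕ)) := hdim ▸ krullDim_le
  have hex : ∀ j, ∃ p, Ideal.Quotient.mkₐ ℂ I p = g (X j) := fun j =>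
    Ideal.Quotient.mkₐ_surjective ℂ I _
  choose φ hφ using hex
  refine ⟨s, by exact_mod_cast hs, φ, fun y hy U hU => ?_⟩
  have hmem : ∀ x : Fin n → ℂ, (∀ p, Ideal.Quotient.mkₐ ℂ I p = 0 → eval x p = 0) ↔
      ∀ p ∈ I, eval x p = 0 := by
    intro x
    simp [Ideal.Quotient.eq_zero_iff_mem]
  have := image_mem_nhds (Ideal.Quotient.mkₐ ℂ I) φ hφ y ((hmem y).2 hy) U hU
  simpa only [hmem] using this

/-! ### Polynomial estimates -/

/-- A nonzero polynomial vanishes only on a null set: slice along the first coordinate, using the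
leading coefficient in that variable and induction on the number of variables. -/
lemma ae_eval_ne_zero : ∀ {n : ℕ} (f : MvPolynomial (Fin n) ℂ), f ≠ 0 →
    ∀ᵐ x : Fin n → ℂ, eval x f ≠ 0 := by
  intro n
  induction n with
  | zero =>
    intro f hf
    refine Filter.Eventually.of_forall fun x h => hf ?_
    rw [MvPolynomial.eq_C_of_isEmpty f] at h ⊢
    simpa using h
  | succ n ih =>
    intro f hf
    have hq : finSuccEquiv ℂ n f ≠ 0 := by simpa using hf
    have hmeas : MeasurableSet {x : Fin (n+1) → ℂ | eval x f ≠ 0} :=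
      ((isOpen_ne_fun (MvPolynomial.continuous_eval f) continuous_const)).measurableSet
    have hmp := volume_preserving_piFinSuccAbove (fun _ : Fin (n+1) => ℂ) 0
    have hmp' := hmp.symm
    rw [← hmp'.map_eq, ae_map_iff hmp'.measurable.aemeasurable hmeas]
    have hm2 := hmeas.preimage hmp'.measurable
    change ∀ᵐ p : ℂ × (Fin n → ℂ), p ∈ ((MeasurableEquiv.piFinSuccAbove (fun _ : Fin (n+1) => ℂ) 0).symm ⁻¹'
      {x : Fin (n+1) → ℂ | eval x f ≠ 0})
    rw [Measure.volume_eq_prod, Measure.ae_prod_mem_iff_ae_ae_mem hm2, Measure.ae_ae_comm (by exact hm2)]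
    filter_upwards [ih _ (Polynomial.leadingCoeff_ne_zero.2 hq)] with y hy
    have hne : (finSuccEquiv ℂ n f).map (eval y) ≠ 0 := by
      intro h
      apply hy
      have := congrArg (fun p => p.coeff (finSuccEquiv ℂ n f).natDegree) h
      simpa using this
    have hfin : {x : ℂ | ((finSuccEquiv ℂ n f).map (eval y)).IsRoot x}.Finite :=
      Polynomial.finite_setOfPred_isRoot hne
    have h0 := hfin.measure_zero volume
    rw [measure_eq_zero_iff_ae_notMem] at h0
    filter_upwards [h0] with x hx h
    apply hx
    have : eval (Fin.cons x y) f = 0 := by simpa [Fin.insertNthEquiv] using h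
    rw [eval_eq_eval_mv_eval'] at this
    exact this

lemma hasFDerivAt_eval {n : ℕ} (p : MvPolynomial (Fin n) ℂ) (x : Fin n → ℂ) :
    HasFDerivAt (fun x => eval x p)
      (∑ i, eval x (pderiv i p) • (ContinuousLinearMap.proj i : (Fin n → ℂ) →L[ℂ] ℂ)) x := by
  induction p using MvPolynomial.induction_on with
  | C a =>
    simp only [eval_C]
    refine (hasFDerivAt_const (𝕜 := ℂ) a x).congr_fderiv ?_
    ext v; simp [sum_apply]
  | add p q hp hq =>
    simp only [map_add]
    refine (HasFDerivAt.fun_add hp hq).congr_fderiv ?_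
    ext v
    simp [sum_apply, add_mul, Finset.sum_add_distrib]
  | mul_X p i hp =>
    have hX : HasFDerivAt (fun x : Fin n → ℂ => x i)
        (ContinuousLinearMap.proj i : (Fin n → ℂ) →L[ℂ] ℂ) x :=
      hasFDerivAt_apply i x
    simp only [map_mul, eval_X]
    refine (HasFDerivAt.fun_mul hp hX).congr_fderiv ?_
    ext v
    simp only [sum_apply, add_apply, smul_apply, ContinuousLinearMap.proj_apply,
      Derivation.leibniz, pderiv_X, smul_eq_mul, map_add, map_mul, eval_X, add_mul,
      Finset.sum_add_distrib, Finset.mul_sum, mul_assoc]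
    congr 1
    rw [Finset.sum_eq_single i]
    · simp
    · intro j _ hj
      simp [hj.symm]
    · simp

/-- Vanishing to order `r` along `Y` gives `‖f x‖ ≤ C ‖x - p‖ ^ r` with a constant uniform in
`p ∈ Y` on a ball, by induction on `r` and the mean value inequality. -/
lemma norm_eval_le {n : ℕ} (y₀ : Fin n → ℂ) (ρ : ℝ) (Y : Set (Fin n → ℂ)) (r : ℕ) :
    ∀ f : MvPolynomial (Fin n) ℂ,
    (∀ y ∈ Y, ∀ ds : List (Fin n), ds.length < r →
      eval y (ds.foldr (fun i g => pderiv i g) f) = 0) →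
    ∃ C : ℝ, 0 < C ∧ ∀ p ∈ Y ∩ Metric.closedBall y₀ ρ, ∀ x ∈ Metric.closedBall y₀ ρ,
      ‖eval x f‖ ≤ C * ‖x - p‖ ^ r := by
  induction r with
  | zero =>
    intro f _
    obtain ⟨C, hC⟩ := (isCompact_closedBall y₀ ρ).exists_bound_of_continuousOn
      (MvPolynomial.continuous_eval f).continuousOn
    refine ⟨max C 1, by positivity, fun p _ x hx => ?_⟩
    simpa using Or.inl (hC x hx)
  | succ r ih =>
    intro f hf
    have h1 : ∀ i, ∃ C : ℝ, 0 < C ∧ ∀ p ∈ Y ∩ Metric.closedBall y₀ ρ, ∀ x ∈ Metric.closedBall y₀ ρ,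
      ‖eval x (pderiv i f)‖ ≤ C * ‖x - p‖ ^ r := fun i => ih _ fun y hy ds hds => by
        simpa using hf y hy (ds ++ [i]) (by simpa using hds)
    choose C hC0 hC using h1
    have hnn := Finset.sum_nonneg (fun i (_ : i ∈ Finset.univ) => (hC0 i).le)
    refine ⟨1 + ∑ i, C i, by linarith, fun p hp x hx => ?_⟩
    -- Intersecting with the ball around `p` keeps `‖z - p‖ ≤ ‖x - p‖` along the segment.
    have hconv : Convex ℝ (Metric.closedBall y₀ ρ ∩ Metric.closedBall p ‖x - p‖) :=
      (convex_closedBall _ _).inter (convex_closedBall _ _)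
    have := hconv.norm_image_sub_le_of_norm_hasFDerivWithin_le (C := (∑ i, C i) * ‖x - p‖ ^ r)
      (fun z _ => (hasFDerivAt_eval f z).hasFDerivWithinAt) (fun z hz => ?_)
      (x := p) (y := x) ⟨hp.2, by simp⟩ ⟨hx, by simp [dist_eq_norm]⟩
    · have h0 : eval p f = 0 := by simpa using hf p hp.1 [] (by simp)
      rw [h0, sub_zero] at this
      refine this.trans ?_
      rw [mul_assoc, ← pow_succ]
      gcongr
      linarith
    · refine (norm_sum_le _ _).trans ?_
      rw [Finset.sum_mul]
      refine Finset.sum_le_sum fun i _ => ?_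
      rw [norm_smul]
      have h2 : ‖(ContinuousLinearMap.proj i : (Fin n → ℂ) →L[ℂ] ℂ)‖ ≤ 1 :=
        ContinuousLinearMap.opNorm_le_bound _ zero_le_one fun v => by
          simpa using norm_le_pi_norm v i
      calc _ ≤ ‖eval z (pderiv i f)‖ * 1 := by gcongr
        _ ≤ C i * ‖z - p‖ ^ r := by rw [mul_one]; exact hC i p hp z hz.1
        _ ≤ _ := by
          have := hz.2
          rw [Metric.mem_closedBall, dist_eq_norm] at this
          have := (hC0 i).le
          gcongr

lemma exists_lipschitz {n s : ℕ} (φ : Fin s → MvPolynomial (Fin n) ℂ) (y₀ : Fin n → ℂ) (ρ : ℝ) :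
    ∃ L : ℝ, 0 < L ∧ ∀ x ∈ Metric.closedBall y₀ ρ, ∀ p ∈ Metric.closedBall y₀ ρ,
      dist (fun j => eval x (φ j)) (fun j => eval p (φ j)) ≤ L * dist x p := by
  have h1 : ∀ j, ∃ C : ℝ, 0 < C ∧ ∀ x ∈ Metric.closedBall y₀ ρ, ∀ p ∈ Metric.closedBall y₀ ρ,
      ‖eval x (φ j) - eval p (φ j)‖ ≤ C * ‖x - p‖ := by
    intro j
    obtain ⟨C, hC⟩ := (isCompact_closedBall y₀ ρ).exists_bound_of_continuousOn
      (f := fun x => ∑ i, eval x (pderiv i (φ j)) • (ContinuousLinearMap.proj i : (Fin n → ℂ) →L[ℂ] ℂ))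
      (Continuous.continuousOn (continuous_finsetSum _ fun i _ =>
        (MvPolynomial.continuous_eval _).smul continuous_const))
    refine ⟨max C 1, by positivity, fun x hx p hp => ?_⟩
    exact (convex_closedBall y₀ ρ).norm_image_sub_le_of_norm_hasFDerivWithin_le
      (fun z _ => (hasFDerivAt_eval (φ j) z).hasFDerivWithinAt)
      (fun z hz => (hC z hz).trans (le_max_left _ _)) hp hx
  choose C hC0 hC using h1
  have hnn := Finset.sum_nonneg (fun i (_ : i ∈ Finset.univ) => (hC0 i).le)
  refine ⟨1 + ∑ j, C j, by linarith, fun x hx p hp => ?_⟩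
  refine (dist_pi_le_iff (by positivity)).2 fun j => ?_
  rw [dist_eq_norm, dist_eq_norm]
  refine (hC j x hx p hp).trans ?_
  have := Finset.single_le_sum (f := C) (fun i _ => (hC0 i).le) (Finset.mem_univ j)
  gcongr
  linarith

/-! ### Volume of tubes and the exponent bound -/

open Metric in
/-- If `Φ` is `L`-Lipschitz on `S`, then the closed `ε`-tube around `S` in `ℂⁿ` has volume at least a
constant times `vol (Φ S) * ε ^ (2 * n - 2 * s)`. A Vitali family of disjoint `ε`-balls centred
on `S` bounds the volume of the tube from below, and the images of its enlargements cover
the image of `S`. -/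
lemma volume_tube {n s : ℕ} (Φ : (Fin n → ℂ) → (Fin s → ℂ)) (S : Set (Fin n → ℂ)) (L : ℝ)
    (hL : 0 < L) (hΦ : ∀ x ∈ S, ∀ p ∈ S, dist (Φ x) (Φ p) ≤ L * dist x p) (ε : ℝ) (hε : 0 < ε) :
    volume (Φ '' S) * (ENNReal.ofReal (ε ^ (2 * n)) * volume (closedBall (0 : Fin n → ℂ) 1)) ≤
      volume (⋃ p ∈ S, closedBall p ε) *
        (ENNReal.ofReal ((L * (5 * ε)) ^ (2 * s)) * volume (closedBall (0 : Fin s → ℂ) 1)) := by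
  obtain ⟨u, huS, hdisj, hcov⟩ := Vitali.exists_disjoint_subfamily_covering_enlargement_closedBall
    S (fun x : Fin n → ℂ => x) (fun _ => ε) ε (fun _ _ => le_rfl) 5 (by norm_num)
  have hcount : u.Countable := hdisj.countable_of_nonempty_interior fun i _ =>
    ⟨i, ball_subset_interior_closedBall (mem_ball_self hε)⟩
  have hfin : ∀ m : ℕ, Module.finrank ℝ (Fin m → ℂ) = 2 * m := by
    intro m
    rw [Module.finrank_pi_fintype]
    simp [Complex.finrank_real_complex, mul_comm]
  have : Countable u := hcount.to_subtype
  have h1 : volume (Φ '' S) ≤ (∑' _ : u, 1) *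
      (ENNReal.ofReal ((L * (5 * ε)) ^ (2 * s)) * volume (closedBall (0 : Fin s → ℂ) 1)) := by
    calc volume (Φ '' S) ≤ volume (⋃ b : u, closedBall (Φ b) (L * (5 * ε))) := by
          refine measure_mono ?_
          rintro _ ⟨a, ha, rfl⟩
          obtain ⟨b, hb, hab⟩ := hcov a ha
          refine Set.mem_iUnion.2 ⟨⟨b, hb⟩, ?_⟩
          have h2 : dist a b ≤ 5 * ε := hab (mem_closedBall_self hε.le)
          exact (hΦ a ha b (huS hb)).trans (by gcongr)
      _ ≤ ∑' b : u, volume (closedBall (Φ b) (L * (5 * ε))) := measure_iUnion_le _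
      _ = _ := by
          rw [← ENNReal.tsum_mul_right]
          refine tsum_congr fun b => ?_
          rw [Measure.addHaar_closedBall' _ _ (by positivity), hfin, one_mul]
  have h2 : (∑' _ : u, 1) *
      (ENNReal.ofReal (ε ^ (2 * n)) * volume (closedBall (0 : Fin n → ℂ) 1)) ≤
      volume (⋃ p ∈ S, closedBall p ε) := by
    calc _ = ∑' b : u, volume (closedBall (b : Fin n → ℂ) ε) := by
          rw [← ENNReal.tsum_mul_right]
          refine tsum_congr fun b => ?_
          rw [Measure.addHaar_closedBall' _ _ hε.le, hfin, one_mul]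
      _ = volume (⋃ p ∈ u, closedBall p ε) :=
          (measure_biUnion hcount hdisj fun _ _ => isClosed_closedBall.measurableSet).symm
      _ ≤ _ := measure_mono (Set.biUnion_subset_biUnion_left huS)
  calc _ ≤ (∑' _ : u, 1) *
      (ENNReal.ofReal ((L * (5 * ε)) ^ (2 * s)) * volume (closedBall (0 : Fin s → ℂ) 1)) *
      (ENNReal.ofReal (ε ^ (2 * n)) * volume (closedBall (0 : Fin n → ℂ) 1)) := by gcongr
    _ = (∑' _ : u, 1) * (ENNReal.ofReal (ε ^ (2 * n)) * volume (closedBall (0 : Fin n → ℂ) 1)) *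
      (ENNReal.ofReal ((L * (5 * ε)) ^ (2 * s)) * volume (closedBall (0 : Fin s → ℂ) 1)) := by
        rw [mul_right_comm]
    _ ≤ _ := by gcongr

lemma exponent_le (κ M ρ e : ℝ) (hκ : 0 < κ) (hρ : 0 < ρ)
    (h : ∀ ε, 0 < ε → ε ≤ ρ → κ ≤ M * ε ^ e) : e ≤ 0 := by
  by_contra! he
  have h1 : Filter.Tendsto (fun ε : ℝ => M * ε ^ e) (nhdsWithin 0 (Set.Ioi 0)) (nhds 0) := by
    have h2 : ContinuousAt (fun ε : ℝ => M * ε ^ e) 0 :=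
      continuousAt_const.mul (Real.continuousAt_rpow_const _ _ (Or.inr he.le))
    have h3 := h2.tendsto
    rw [Real.zero_rpow he.ne', mul_zero] at h3
    exact h3.mono_left nhdsWithin_le_nhds
  have h4 := ge_of_tendsto h1 (b := κ) (by
    filter_upwards [Ioc_mem_nhdsGT hρ] with ε hε using h ε hε.1 hε.2)
  linarith

open Metric in
/-- The analytic heart: integrability of `|f|^{-2c}` near `y` bounds `vol (tube) * ε ^ (-2 * r * c)`
as `ε → 0`, while the tube has volume at least a constant times `ε ^ (2 * n - 2 * s)`. -/
lemma mul_le_of_integrableOn {n s r : ℕ} (f : MvPolynomial (Fin n) ℂ) (hf : f ≠ 0)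
    (Y : Set (Fin n → ℂ)) (y : Fin n → ℂ) (φ : Fin s → MvPolynomial (Fin n) ℂ)
    (hφ : ∀ U ∈ nhds y, (fun x j => eval x (φ j)) '' (Y ∩ U) ∈ nhds (fun j => eval y (φ j)))
    (hvan : ∀ y ∈ Y, ∀ ds : List (Fin n), ds.length < r →
      eval y (ds.foldr (fun i g => pderiv i g) f) = 0)
    (c : ℝ) (hc : 0 < c) (U : Set (Fin n → ℂ)) (hU : U ∈ nhds y)
    (hint : IntegrableOn (fun x : Fin n → ℂ => ‖eval x f‖ ^ (-2 * c)) U) :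
    (r : ℝ) * c ≤ n - s := by
  obtain ⟨ρ', hρ', hρU⟩ := nhds_basis_closedBall.mem_iff.1 hU
  -- The tube radius is kept at most `ρ`, so that tubes around `S` stay inside the ball.
  set ρ := ρ' / 2 with hρdef
  have hρ : 0 < ρ := half_pos hρ'
  obtain ⟨C, hC0, hC⟩ := norm_eval_le y ρ' Y r f hvan
  obtain ⟨L, hL0, hL⟩ := exists_lipschitz φ y ρ
  set Φ : (Fin n → ℂ) → (Fin s → ℂ) := fun x j => eval x (φ j) with hΦdef
  set S := Y ∩ closedBall y ρ with hS
  have hv0 : volume (Φ '' S) ≠ 0 := by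
    have := Measure.measure_pos_of_mem_nhds volume (hφ _ (closedBall_mem_nhds y hρ))
    exact this.ne'
  have hcn0 : volume (closedBall (0 : Fin n → ℂ) 1) ≠ 0 :=
    (measure_closedBall_pos _ _ one_pos).ne'
  have hcn : volume (closedBall (0 : Fin n → ℂ) 1) ≠ ⊤ := measure_closedBall_lt_top.ne
  have hcs : volume (closedBall (0 : Fin s → ℂ) 1) ≠ ⊤ := measure_closedBall_lt_top.ne
  -- Truncating at `1` makes the volume finite without a compactness argument for the image of `S`.
  set v := min (volume (Φ '' S)) 1 with hv
  have hvt : v ≠ ⊤ := (min_le_right _ _).trans_lt ENNReal.one_lt_top |>.ne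
  have hvpos : 0 < v.toReal := ENNReal.toReal_pos (by simp [hv, hv0]) hvt
  set M := ∫⁻ x in U, ENNReal.ofReal (‖eval x f‖ ^ (-2 * c)) with hM
  have hMt : M ≠ ⊤ := by
    have := hint.lintegral_lt_top
    exact this.ne
  have main : ∀ ε, 0 < ε → ε ≤ ρ →
      v.toReal * (ε ^ (2 * n) * (volume (closedBall (0 : Fin n → ℂ) 1)).toReal) *
        (C * ε ^ r) ^ (-2 * c) ≤
      M.toReal * ((L * (5 * ε)) ^ (2 * s) * (volume (closedBall (0 : Fin s → ℂ) 1)).toReal) := by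
    intro ε hε hερ
    set T := ⋃ p ∈ S, closedBall p ε with hT
    have hTsub : T ⊆ closedBall y ρ' := by
      refine Set.iUnion₂_subset fun p hp => closedBall_subset_closedBall' ?_
      have : dist p y ≤ ρ := hp.2
      linarith
    have hTt : volume T ≠ ⊤ := ((measure_mono hTsub).trans_lt measure_closedBall_lt_top).ne
    have h1 := volume_tube Φ S L hL0 (fun x hx p hp => hL x hx.2 p hp.2) ε hε
    have h2 : v * (ENNReal.ofReal (ε ^ (2 * n)) * volume (closedBall (0 : Fin n → ℂ) 1)) ≤
      volume T * (ENNReal.ofReal ((L * (5 * ε)) ^ (2 * s)) *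
        volume (closedBall (0 : Fin s → ℂ) 1)) :=
      le_trans (by gcongr; exact min_le_left _ _) h1
    have h3 := ENNReal.toReal_mono (by finiteness) h2
    simp only [ENNReal.toReal_mul] at h3
    rw [ENNReal.toReal_ofReal (by positivity), ENNReal.toReal_ofReal (by positivity)] at h3
    have h4 : ENNReal.ofReal ((C * ε ^ r) ^ (-2 * c)) * volume T ≤ M := by
      have h5 : ∀ᵐ x ∂(volume.restrict U), x ∈ T →
          ENNReal.ofReal ((C * ε ^ r) ^ (-2 * c)) ≤ ENNReal.ofReal (‖eval x f‖ ^ (-2 * c)) := by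
        filter_upwards [ae_restrict_of_ae (ae_eval_ne_zero f hf)] with x hx hxT
        obtain ⟨p, hp, hxp⟩ := Set.mem_iUnion₂.1 hxT
        have hle : ‖eval x f‖ ≤ C * ε ^ r := by
          refine (hC p ⟨hp.1, closedBall_subset_closedBall (by linarith) hp.2⟩ x (hTsub hxT)).trans ?_
          rw [mem_closedBall, dist_eq_norm] at hxp
          gcongr
        exact ENNReal.ofReal_le_ofReal
          (Real.rpow_le_rpow_of_nonpos (norm_pos_iff.2 hx) hle (by linarith))
      have hTU : volume.restrict U T = volume T :=
        Measure.restrict_eq_self _ (hTsub.trans hρU)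
      rw [← hTU]
      refine le_trans ?_ (mul_meas_ge_le_lintegral₀ (μ := volume.restrict U)
        (f := fun x => ENNReal.ofReal (‖eval x f‖ ^ (-2 * c)))
        hint.aemeasurable.ennreal_ofReal (ENNReal.ofReal ((C * ε ^ r) ^ (-2 * c))))
      refine mul_le_mul_right (measure_mono_ae ?_) _
      filter_upwards [h5] with x hx using hx
    have h6 := ENNReal.toReal_mono hMt h4
    rw [ENNReal.toReal_mul, ENNReal.toReal_ofReal (by positivity)] at h6
    calc _ ≤ (volume T).toReal * ((L * (5 * ε)) ^ (2 * s) *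
          (volume (closedBall (0 : Fin s → ℂ) 1)).toReal) * (C * ε ^ r) ^ (-2 * c) := by gcongr
      _ = (C * ε ^ r) ^ (-2 * c) * (volume T).toReal * ((L * (5 * ε)) ^ (2 * s) *
          (volume (closedBall (0 : Fin s → ℂ) 1)).toReal) := by ring
      _ ≤ _ := by gcongr
  have hcnr : 0 < (volume (closedBall (0 : Fin n → ℂ) 1)).toReal := ENNReal.toReal_pos hcn0 hcn
  have hfinal := exponent_le
    (v.toReal * (volume (closedBall (0 : Fin n → ℂ) 1)).toReal * C ^ (-2 * c))
    (M.toReal * ((L * 5) ^ (2 * s) * (volume (closedBall (0 : Fin s → ℂ) 1)).toReal))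
    ρ (2 * s + 2 * (r * c) - 2 * n) (by positivity) hρ (by
      intro ε hε hερ
      have h := main ε hε hερ
      rw [Real.mul_rpow hC0.le (by positivity), ← Real.rpow_natCast_mul hε.le] at h
      have e1 : ε ^ (2 * (s : ℝ) + 2 * (r * c) - 2 * n) =
          ε ^ (2 * s) / (ε ^ (2 * n) * ε ^ ((r : ℝ) * (-2 * c))) := by
        rw [← Real.rpow_natCast, ← Real.rpow_natCast, ← Real.rpow_add hε, ← Real.rpow_sub hε]
        congr 1
        push_cast
        ring
      rw [e1, ← mul_div_assoc, le_div_iff₀ (by positivity)]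
      calc _ = v.toReal * (ε ^ (2 * n) * (volume (closedBall (0 : Fin n → ℂ) 1)).toReal) *
            (C ^ (-2 * c) * ε ^ ((r : ℝ) * (-2 * c))) := by ring
        _ ≤ _ := h
        _ = _ := by rw [← mul_assoc L, mul_pow (L * 5)]; ring)
  linarith

/-- If `f` vanishes to order at least `r > 1` at every point of an irreducible
`d`-dimensional subvariety `Y ⊆ ℂⁿ` (given as the zero set of a prime ideal `I`
whose quotient ring has Krull dimension `d`), then `r·c_y(f) ≤ n − d` for all `y ∈ Y`. -/
theorem stmt11 {n : ℕ} (f : MvPolynomial (Fin n) ℂ) (r d : ℕ) (hr : 1 < r)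
    (I : Ideal (MvPolynomial (Fin n) ℂ)) (hI : I.IsPrime)
    (Y : Set (Fin n → ℂ))
    (hY : Y = {y | ∀ g ∈ I, MvPolynomial.eval y g = 0})
    (hYne : Y.Nonempty)
    (hdim : ringKrullDim (MvPolynomial (Fin n) ℂ ⧸ I) = (d : WithBot (WithTop ℕ)))
    (hvan : ∀ y ∈ Y, ∀ ds : List (Fin n), ds.length < r →
      MvPolynomial.eval y (ds.foldr (fun i g => MvPolynomial.pderiv i g) f) = 0) :
    ∀ y ∈ Y, (r : ℝ) * lctAt f y ≤ (n : ℝ) - (d : ℝ) := by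
  subst hY
  intro y hy
  obtain ⟨s, hds, φ, hφ⟩ := exists_projection I hI hdim
  have hdn : (d : ℝ) ≤ n := by
    have h1 := ringKrullDim_quotient_le I
    rw [hdim, MvPolynomial.ringKrullDim_of_isNoetherianRing] at h1
    simp only [ringKrullDim_eq_zero_of_field, Nat.card_fin, zero_add] at h1
    have h2 : (d : WithBot ℕ∞) ≤ (n : WithBot ℕ∞) := h1
    have h3 : d ≤ n := by exact_mod_cast h2
    exact_mod_cast h3
  have hr0 : (0 : ℝ) < r := by exact_mod_cast (zero_lt_one.trans hr)
  rw [← le_div_iff₀' hr0]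
  by_cases hf : f = 0
  · -- For `f = 0` the integrand is `0 ^ (-2 * s) = 0`, so every `s > 0` is admissible and the
    -- supremum of this unbounded set is `0` by convention.
    have hzero : lctAt f y = 0 := by
      refine Real.sSup_of_not_bddAbove fun ⟨B, hB⟩ => ?_
      have h1 : |B| + 1 ≤ B := hB ⟨by positivity, Set.univ, Filter.univ_mem, by
        have h2 : -2 * (|B| + 1) ≠ 0 := by have := abs_nonneg B; linarith
        simp only [hf, map_zero, norm_zero, Real.zero_rpow h2]
        exact integrableOn_zero⟩
      linarith [le_abs_self B]
    rw [hzero]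
    exact div_nonneg (by linarith) hr0.le
  · refine Real.sSup_le ?_ (div_nonneg (by linarith) hr0.le)
    rintro c ⟨hc, U, hU, hint⟩
    rw [le_div_iff₀' hr0]
    have h1 := mul_le_of_integrableOn f hf _ y φ (hφ y hy) hvan c hc U hU hint
    have h2 : (d : ℝ) ≤ s := by exact_mod_cast hds
    linarith
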